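/- For every α : ℕ → {0,1,2}, Φ(α) = Φ(ρ(α)). -/

import Mathlib

open Filter

/-- `triN s` : numbering of the nodes of the ternary tree:
`N(⟨⟩) = 1`, `N(s * ⟨i⟩) = 2 * N(s) + i - 1`. -/
def triN (s : List (Fin 3)) : ℕ := s.foldl (fun a i => 2 * a + i.val - 1) 1

/-- Initial segment of length `n` of `α`. -/
def seg3 (α : ℕ → Fin 3) (n : ℕ) : List (Fin 3) := List.ofFn fun i : Fin n => α i

/-- `Phi α` is the limit of the Cauchy sequence `x_α^n = 2^(-(n+1)) * N(ᾱ n)`. -/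
noncomputable def Phi (α : ℕ → Fin 3) : ℝ :=
  limUnder atTop fun n => (triN (seg3 α n) : ℝ) / 2 ^ (n + 1)

/-- `rho3` is the identity on triples over `{0,1,2}` except on four patterns. -/
def rho3 : Fin 3 × Fin 3 × Fin 3 → Fin 3 × Fin 3 × Fin 3 := fun t =>
  if t = (1, 2, 2) then (2, 0, 2)
  else if t = (1, 0, 0) then (0, 2, 0)
  else if t = (0, 2, 2) then (1, 0, 2)
  else if t = (2, 0, 0) then (1, 2, 0)
  else t

/-- The auxiliary triples `σ^n_α`. -/
def sigAux (α : ℕ → Fin 3) : ℕ → Fin 3 × Fin 3 × Fin 3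
  | 0 => rho3 (α 0, α 1, α 2)
  | n + 1 => rho3 ((sigAux α n).2.1, α (n + 2), α (n + 3))

/-- The map `ρ : {0,1,2}^ℕ → {0,1,2}^ℕ`, `ρ(α)(n) = (σ^n_α)₀`. -/
def rho (α : ℕ → Fin 3) (n : ℕ) : Fin 3 := (sigAux α n).1

/-!
Appending the first two entries of `rho3 (a, b, c)` to a node has the same effect on the numbering
`triN` as appending `a, b`, because `rho3` preserves `2 * a + b`. Sliding the window along `α`,
the initial segment of `α` of length `n + 2` has the same number as the initial segment of `rho α`
of length `n + 1` followed by one pending digit, the middle entry of `sigAux α n`. The numbers of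
the length `n + 2` segments of `α` and `rho α` therefore differ by at most `2`, a difference that
the factor `2 ^ (-(n + 3))` makes vanish in the limit.
-/

theorem seg3_succ (α : ℕ → Fin 3) (n : ℕ) : seg3 α (n + 1) = seg3 α n ++ [α n] := by
  simp only [seg3, List.ofFn_succ_last, Fin.val_castSucc, Fin.val_last]

theorem triN_append (s t : List (Fin 3)) :
    triN (s ++ t) = t.foldl (fun a i => 2 * a + i.val - 1) (triN s) :=
  List.foldl_append

theorem triN_append_congr {s t : List (Fin 3)} (h : triN s = triN t) (u : List (Fin 3)) :
    triN (s ++ u) = triN (t ++ u) := by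
  rw [triN_append, triN_append, h]

theorem triN_pos (s : List (Fin 3)) : 0 < triN s := by
  induction s using List.reverseRecOn with
  | nil => exact Nat.one_pos
  | append_singleton s i ih =>
    simp only [triN_append, List.foldl_cons, List.foldl_nil]
    omega

theorem triN_append_singleton_add_one (s : List (Fin 3)) (i : Fin 3) :
    triN (s ++ [i]) + 1 = 2 * triN s + i.val := by
  have hs := triN_pos s
  simp only [triN_append, List.foldl_cons, List.foldl_nil]
  omega

theorem cast_triN_append_singleton (s : List (Fin 3)) (i : Fin 3) :
    (triN (s ++ [i]) : ℝ) = 2 * triN s + i.val - 1 :=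
  eq_sub_of_add_eq (mod_cast triN_append_singleton_add_one s i)

theorem abs_triN_append_singleton_sub_le (s : List (Fin 3)) (i j : Fin 3) :
    |(triN (s ++ [i]) : ℝ) - triN (s ++ [j])| ≤ 2 := by
  have hi : (i.val : ℝ) ≤ 2 := mod_cast i.is_le
  have hj : (j.val : ℝ) ≤ 2 := mod_cast j.is_le
  rw [cast_triN_append_singleton, cast_triN_append_singleton, abs_le]
  constructor <;> linarith

theorem two_mul_rho3_fst_add_snd (a b c : Fin 3) :
    2 * (rho3 (a, b, c)).1.val + (rho3 (a, b, c)).2.1.val = 2 * a.val + b.val := by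
  revert a b c
  decide

theorem triN_append_rho3 (s : List (Fin 3)) (a b c : Fin 3) :
    triN (s ++ [(rho3 (a, b, c)).1, (rho3 (a, b, c)).2.1]) = triN (s ++ [a, b]) := by
  have triN_append_pair (x y : Fin 3) :
      triN (s ++ [x, y]) + 3 = 4 * triN s + (2 * x.val + y.val) := by
    have hx := triN_append_singleton_add_one s x
    have hxy := triN_append_singleton_add_one (s ++ [x]) y
    rw [List.append_assoc, List.singleton_append] at hxy
    omega
  apply Nat.add_right_cancel (m := 3)
  rw [triN_append_pair, triN_append_pair, two_mul_rho3_fst_add_snd]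

theorem triN_seg3_rho_append_sigAux (α : ℕ → Fin 3) (n : ℕ) :
    triN (seg3 (rho α) (n + 1) ++ [(sigAux α n).2.1]) = triN (seg3 α (n + 2)) := by
  induction n with
  | zero => exact triN_append_rho3 [] (α 0) (α 1) (α 2)
  | succ n ih =>
    calc triN (seg3 (rho α) (n + 2) ++ [(sigAux α (n + 1)).2.1])
        = triN (seg3 (rho α) (n + 1) ++ [(sigAux α (n + 1)).1, (sigAux α (n + 1)).2.1]) := by
          rw [seg3_succ, List.append_assoc, List.singleton_append, rho]
      _ = triN (seg3 (rho α) (n + 1) ++ [(sigAux α n).2.1, α (n + 2)]) :=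
          triN_append_rho3 _ _ _ _
      _ = triN (seg3 (rho α) (n + 1) ++ [(sigAux α n).2.1] ++ [α (n + 2)]) := by
          rw [List.append_assoc, List.singleton_append]
      _ = triN (seg3 α (n + 2) ++ [α (n + 2)]) := triN_append_congr ih _
      _ = triN (seg3 α (n + 3)) := by rw [← seg3_succ]

theorem abs_triN_seg3_sub_rho_le (α : ℕ → Fin 3) (n : ℕ) :
    |(triN (seg3 α (n + 2)) : ℝ) - triN (seg3 (rho α) (n + 2))| ≤ 2 := by
  rw [← triN_seg3_rho_append_sigAux, seg3_succ (rho α) (n + 1)]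
  exact abs_triN_append_singleton_sub_le _ _ _

theorem tendsto_triN_seg3_div_Phi (α : ℕ → Fin 3) :
    Tendsto (fun n => (triN (seg3 α n) : ℝ) / 2 ^ (n + 1)) atTop (nhds (Phi α)) := by
  refine (cauchySeq_of_le_geometric_two (C := 1 / 2) fun n => ?_).tendsto_limUnder
  have digit_le : ((α n).val : ℝ) ≤ 2 := mod_cast (α n).is_le
  calc dist ((triN (seg3 α n) : ℝ) / 2 ^ (n + 1)) (triN (seg3 α (n + 1)) / 2 ^ (n + 1 + 1))
      = |(1 - ((α n).val : ℝ)) / 2 ^ (n + 2)| := by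
        rw [seg3_succ, cast_triN_append_singleton, Real.dist_eq]
        congr 1
        field_simp
        ring
    _ = |1 - ((α n).val : ℝ)| / 2 ^ (n + 2) := by
        rw [abs_div, abs_of_pos (by positivity : (0 : ℝ) < 2 ^ (n + 2))]
    _ ≤ 1 / 2 ^ (n + 2) := by
        gcongr
        rw [abs_le]
        constructor <;> linarith
    _ = 1 / 2 / 2 / 2 ^ n := by ring

theorem Phi_eq_of_eventually_abs_triN_sub_le {α β : ℕ → Fin 3} {C : ℝ}
    (h : ∀ᶠ n in atTop, |(triN (seg3 α n) : ℝ) - triN (seg3 β n)| ≤ C) : Phi α = Phi β := by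
  have bound_tendsto : Tendsto (fun n : ℕ => C / 2 ^ (n + 1)) atTop (nhds 0) :=
    ((tendsto_pow_atTop_atTop_of_one_lt (one_lt_two : (1 : ℝ) < 2)).comp
      (tendsto_add_atTop_nat 1)).const_div_atTop C
  refine sub_eq_zero.1 (tendsto_nhds_unique
    ((tendsto_triN_seg3_div_Phi α).sub (tendsto_triN_seg3_div_Phi β))
    (squeeze_zero_norm' (h.mono fun n hn => ?_) bound_tendsto))
  rw [← sub_div, Real.norm_eq_abs, abs_div, abs_of_pos (by positivity : (0 : ℝ) < 2 ^ (n + 1))]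
  gcongr

theorem stmt7 (α : ℕ → Fin 3) : Phi α = Phi (rho α) := by
  apply Phi_eq_of_eventually_abs_triN_sub_le (C := 2)
  filter_upwards [eventually_ge_atTop 2] with n hn
  obtain ⟨m, rfl⟩ := Nat.exists_eq_add_of_le' hn
  exact abs_triN_seg3_sub_rho_le α m
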